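/- Let H and K be complex Hilbert spaces and T ∈ B(H,K). Then there exists a unique operator V ∈ B(H,K) such that |T*|^{1/2} ∘ V = T with range V ⊆ closure(range T), and |T|^{1/2} ∘ V* = T* with range V* ⊆ closure(range T*) (i.e., V and V* are the reduced solutions of the systems |T*|^{1/2}X = T and |T|^{1/2}Y = T*, respectively). Moreover V*V = |T|, VV* = |T*|, V ∘ |T|^β = |T*|^β ∘ V for every real β > 0, closure(range V) = closure(range T), and closure(range V*) = closure(range T*). -/

import Mathlib

/-- `|T|^α = (T*T)^{α/2}` defined via the continuous functional calculus. -/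
noncomputable def absPow {H K : Type*} [NormedAddCommGroup H] [InnerProductSpace ℂ H]
    [NormedAddCommGroup K] [InnerProductSpace ℂ K] [CompleteSpace H] [CompleteSpace K]
    (T : H →L[ℂ] K) (α : ℝ) : H →L[ℂ] H :=
  CFC.rpow ((ContinuousLinearMap.adjoint T).comp T) (α / 2)

open ContinuousLinearMap in
theorem VT_rpow_add {H : Type*} [NormedAddCommGroup H] [InnerProductSpace ℂ H] [CompleteSpace H]
    (A : H →L[ℂ] H) (hA : 0 ≤ A) {x y : ℝ} (hx : 0 < x) (hy : 0 < y) :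
    CFC.rpow A x * CFC.rpow A y = CFC.rpow A (x + y) := by
  unfold CFC.rpow
  have h1 : Continuous (fun t : NNReal => t ^ x) := NNReal.continuous_rpow_const hx.le
  have h2 : Continuous (fun t : NNReal => t ^ y) := NNReal.continuous_rpow_const hy.le
  rw [← cfc_mul _ _ A h1.continuousOn h2.continuousOn]
  congr 1
  funext t
  rw [NNReal.rpow_add_of_nonneg _ hx.le hy.le]

theorem VT_intertwine {H K : Type*} [NormedAddCommGroup H] [InnerProductSpace ℂ H] [CompleteSpace H]
    [NormedAddCommGroup K] [InnerProductSpace ℂ K] [CompleteSpace K]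
    (T : H →L[ℂ] K) (A : H →L[ℂ] H) (B : K →L[ℂ] K) (hA : 0 ≤ A) (hB : 0 ≤ B)
    (h : T.comp A = B.comp T) {s : ℝ} (hs : 0 < s) :
    T.comp (CFC.rpow A s) = (CFC.rpow B s).comp T := by
  have hA' : IsSelfAdjoint A := IsSelfAdjoint.of_nonneg hA
  have hB' : IsSelfAdjoint B := IsSelfAdjoint.of_nonneg hB
  let S : Set ℝ := spectrum ℝ A ∪ spectrum ℝ B
  have hSc : IsCompact S :=
    (ContinuousFunctionalCalculus.isCompact_spectrum A).union
      (ContinuousFunctionalCalculus.isCompact_spectrum B)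
  haveI : CompactSpace S := isCompact_iff_compactSpace.mp hSc
  have hSA : spectrum ℝ A ⊆ S := Set.subset_union_left
  have hSB : spectrum ℝ B ⊆ S := Set.subset_union_right
  have key : ∀ f : C(S, ℝ), T.comp (cfcHomSuperset hA' hSA f) = (cfcHomSuperset hB' hSB f).comp T := by
    intro f
    refine ContinuousMap.induction_on_of_compact (p := fun f : C(S, ℝ) =>
      T.comp (cfcHomSuperset hA' hSA f) = (cfcHomSuperset hB' hSB f).comp T) ?_ ?_ ?_ ?_ ?_ ?_ f
    · intro r
      have e : (ContinuousMap.const S r) = algebraMap ℝ C(S, ℝ) r := rfl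
      rw [e, AlgHomClass.commutes, AlgHomClass.commutes]
      ext x
      simp [Algebra.algebraMap_eq_smul_one]
    · rw [cfcHomSuperset_id, cfcHomSuperset_id, h]
    · rw [map_star, map_star, cfcHomSuperset_id, cfcHomSuperset_id, hA'.star_eq, hB'.star_eq, h]
    · intro f g hf hg
      rw [map_add, map_add, ContinuousLinearMap.comp_add, ContinuousLinearMap.add_comp, hf, hg]
    · intro f g hf hg
      rw [map_mul, map_mul, ContinuousLinearMap.mul_def, ContinuousLinearMap.mul_def,
        ← ContinuousLinearMap.comp_assoc, hf, ContinuousLinearMap.comp_assoc, hg,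
        ContinuousLinearMap.comp_assoc]
    · intro f hf
      have hc : IsClosed {f : C(S, ℝ) |
          T.comp (cfcHomSuperset hA' hSA f) = (cfcHomSuperset hB' hSB f).comp T} := by
        refine isClosed_eq ?_ ?_
        · exact continuous_const.clm_comp (cfcHomSuperset_continuous hA' hSA)
        · exact (cfcHomSuperset_continuous hB' hSB).clm_comp continuous_const
      exact hc.mem_of_frequently_of_tendsto hf Filter.tendsto_id
  have hc : Continuous (fun t : ℝ => t ^ s) := Real.continuous_rpow_const hs.le
  have eA : CFC.rpow A s = cfcHomSuperset hA' hSA ⟨S.domRestrict (fun t : ℝ => t ^ s), hc.continuousOn.domRestrict⟩ := by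
    rw [CFC.rpow_eq_pow, CFC.rpow_eq_cfc_real hA, cfc_apply _ A hA' hc.continuousOn]
    rfl
  have eB : CFC.rpow B s = cfcHomSuperset hB' hSB ⟨S.domRestrict (fun t : ℝ => t ^ s), hc.continuousOn.domRestrict⟩ := by
    rw [CFC.rpow_eq_pow, CFC.rpow_eq_cfc_real hB, cfc_apply _ B hB' hc.continuousOn]
    rfl
  rw [eA, eB, key]

/-- Closure of the range as the orthogonal complement of the kernel of the adjoint. -/
theorem VT_closure_range {H K : Type*} [NormedAddCommGroup H] [InnerProductSpace ℂ H]
    [CompleteSpace H] [NormedAddCommGroup K] [InnerProductSpace ℂ K] [CompleteSpace K]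
    (T : H →L[ℂ] K) :
    closure (Set.range T) = ((ContinuousLinearMap.adjoint T).kerᗮ : Submodule ℂ K) := by
  rw [ContinuousLinearMap.orthogonal_ker, ContinuousLinearMap.adjoint_adjoint]
  rfl

theorem VT_cancel {H K : Type*} [NormedAddCommGroup H] [InnerProductSpace ℂ H]
    [CompleteSpace H] [NormedAddCommGroup K] [InnerProductSpace ℂ K] [CompleteSpace K]
    (P : H →L[ℂ] H) (hP : ContinuousLinearMap.adjoint P = P) (X Y : H →L[ℂ] K)
    (h : X.comp P = Y.comp P) (h0 : ∀ x, P x = 0 → X x = Y x) : X = Y := by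
  have h1 : ∀ z ∈ closure (Set.range P), X z = Y z := by
    intro z hz
    refine closure_minimal (s := Set.range P) (t := {z | X z = Y z}) ?_
      (isClosed_eq X.continuous Y.continuous) hz
    rintro _ ⟨y, rfl⟩
    exact DFunLike.congr_fun h y
  rw [VT_closure_range, hP] at h1
  haveI : CompleteSpace P.ker := P.isClosed_ker.completeSpace_coe
  ext x
  obtain ⟨y, hy, z, hz, rfl⟩ := P.ker.exists_add_mem_mem_orthogonal x
  rw [map_add, map_add, h0 y hy, h1 z hz]

theorem VT_douglas {H K : Type*} [NormedAddCommGroup H] [InnerProductSpace ℂ H]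
    [CompleteSpace H] [NormedAddCommGroup K] [InnerProductSpace ℂ K] [CompleteSpace K]
    (P : H →L[ℂ] H) (hP : ContinuousLinearMap.adjoint P = P) (T : H →L[ℂ] K)
    (C : ℝ) (h : ∀ x, ‖T x‖ ≤ C * ‖P x‖) :
    ∃ V : H →L[ℂ] K, V.comp P = T ∧ ∀ x, P x = 0 → V x = 0 := by
  let M : Submodule ℂ H := P.kerᗮ
  have hM : closure (Set.range P) = (M : Set H) := by rw [VT_closure_range, hP]
  have hmem : ∀ x, P x ∈ M := by
    intro x
    have : P x ∈ closure (Set.range P) := subset_closure ⟨x, rfl⟩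
    rwa [hM] at this
  let e : H →ₗ[ℂ] M := (P : H →ₗ[ℂ] H).codRestrict M hmem
  have hd : DenseRange e := by
    intro z
    rw [Topology.IsInducing.subtypeVal.closure_eq_preimage_closure_image]
    have : Subtype.val '' Set.range e = Set.range P := by
      rw [← Set.range_comp]; rfl
    change (z : H) ∈ closure (Subtype.val '' Set.range e)
    rw [this, hM]
    exact z.2
  have hn : ∃ C, ∀ x, ‖(T : H →ₗ[ℂ] K) x‖ ≤ C * ‖e x‖ := ⟨C, h⟩
  refine ⟨((T : H →ₗ[ℂ] K).extendOfNorm e).comp M.orthogonalProjectionOnto, ?_, ?_⟩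
  · ext x
    have := LinearMap.extendOfNorm_eq hd hn x
    have h2 : M.orthogonalProjectionOnto (P x) = e x :=
      Submodule.orthogonalProjectionOnto_mem_subspace_eq_self (K := M) (e x)
    simp only [ContinuousLinearMap.comp_apply, h2]
    exact this
  · intro x hx
    have h2 : M.orthogonalProjectionOnto x = 0 := by
      rw [Submodule.orthogonalProjectionOnto_eq_zero_iff]
      exact Submodule.le_orthogonal_orthogonal _ hx
    simp only [ContinuousLinearMap.comp_apply, h2, map_zero]

theorem VT_ker_half {H : Type*} [NormedAddCommGroup H] [InnerProductSpace ℂ H] [CompleteSpace H]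
    (A : H →L[ℂ] H) (hA : 0 ≤ A) {s : ℝ} (hs : 0 < s) (x : H) (hx : CFC.rpow A s x = 0) :
    CFC.rpow A (s / 2) x = 0 := by
  have hsa : ContinuousLinearMap.adjoint (CFC.rpow A (s / 2)) = CFC.rpow A (s / 2) :=
    (IsSelfAdjoint.of_nonneg (CFC.rpow_nonneg (a := A) (y := s / 2))).star_eq
  have h := VT_rpow_add A hA (half_pos hs) (half_pos hs)
  rw [add_halves] at h
  rw [← h] at hx
  rw [← inner_self_eq_zero (𝕜 := ℂ)]
  nth_rewrite 1 [← hsa]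
  rw [ContinuousLinearMap.adjoint_inner_left]
  rw [show (CFC.rpow A (s / 2)) ((CFC.rpow A (s / 2)) x) = 0 from hx, inner_zero_right]

theorem VT_ker_rpow {H : Type*} [NormedAddCommGroup H] [InnerProductSpace ℂ H] [CompleteSpace H]
    (A : H →L[ℂ] H) (hA : 0 ≤ A) {s t : ℝ} (hs : 0 < s) (ht : 0 < t) (x : H)
    (hx : CFC.rpow A s x = 0) : CFC.rpow A t x = 0 := by
  have h1 : ∀ n : ℕ, CFC.rpow A (s / 2 ^ n) x = 0 := by
    intro n
    induction n with
    | zero => simpa using hx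
    | succ n ih =>
      have := VT_ker_half A hA (by positivity) x ih
      rwa [pow_succ, ← div_div]
  obtain ⟨n, hn⟩ := pow_unbounded_of_one_lt (s / t) (one_lt_two)
  have hlt : s / 2 ^ n < t := by
    rw [div_lt_iff₀ ht] at hn
    rw [div_lt_iff₀ (by positivity)]
    linarith
  have h2 := VT_rpow_add A hA (x := t - s / 2 ^ n) (y := s / 2 ^ n) (by linarith) (by positivity)
  rw [sub_add_cancel] at h2
  rw [← h2, mul_apply_eq_comp, h1 n, map_zero]

theorem VT_gram {H K : Type*} [NormedAddCommGroup H] [InnerProductSpace ℂ H]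
    [CompleteSpace H] [NormedAddCommGroup K] [InnerProductSpace ℂ K] [CompleteSpace K]
    (T : H →L[ℂ] K) :
    0 ≤ (ContinuousLinearMap.adjoint T).comp T := by
  rw [ContinuousLinearMap.nonneg_iff_isPositive]
  exact ContinuousLinearMap.isPositive_adjoint_comp_self T

theorem VT_basic {H K : Type*} [NormedAddCommGroup H] [InnerProductSpace ℂ H]
    [CompleteSpace H] [NormedAddCommGroup K] [InnerProductSpace ℂ K] [CompleteSpace K]
    (T : H →L[ℂ] K) :
    ContinuousLinearMap.adjoint (absPow T (1/2)) = absPow T (1/2) ∧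
    (absPow T (1/2)).comp (absPow T (1/2)) = absPow T 1 ∧
    (absPow T 1).comp (absPow T 1) = (ContinuousLinearMap.adjoint T).comp T ∧
    (∀ x, absPow T (1/2) x = 0 ↔ T x = 0) ∧
    (∀ β, 0 < β → ∀ x, T x = 0 → absPow T β x = 0) ∧
    (∀ β, 0 < β → (absPow T β).comp (absPow T (1/2)) = (absPow T (1/2)).comp (absPow T β)) ∧
    (∀ β, 0 < β → T.comp (absPow T β) = (absPow (ContinuousLinearMap.adjoint T) β).comp T) := by
  have hA := VT_gram T
  have hone : CFC.rpow ((ContinuousLinearMap.adjoint T).comp T) 1 =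
      (ContinuousLinearMap.adjoint T).comp T := CFC.rpow_one _ hA
  have hk : ∀ β, 0 < β → ∀ x, T x = 0 → absPow T β x = 0 := by
    intro β hβ x hx
    refine VT_ker_rpow _ hA one_pos (half_pos hβ) x ?_
    rw [hone, ContinuousLinearMap.comp_apply, hx, map_zero]
  refine ⟨?_, ?_, ?_, ?_, hk, ?_, ?_⟩
  · exact (IsSelfAdjoint.of_nonneg (CFC.rpow_nonneg (y := 1 / 2 / 2))).star_eq
  · have := VT_rpow_add _ hA (x := 1/2/2) (y := 1/2/2) (by norm_num) (by norm_num)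
    rw [show (1/2/2 + 1/2/2 : ℝ) = 1 / 2 by norm_num] at this
    exact this
  · have := VT_rpow_add _ hA (x := 1/2) (y := 1/2) (by norm_num) (by norm_num)
    rw [add_halves, hone] at this
    exact this
  · intro x
    refine ⟨fun h => ?_, hk _ (by norm_num) x⟩
    have := VT_ker_rpow _ hA (s := 1/2/2) (by norm_num) one_pos x h
    rw [hone, ContinuousLinearMap.comp_apply] at this
    rw [← inner_self_eq_zero (𝕜 := ℂ), ← ContinuousLinearMap.adjoint_inner_left, this,
      inner_zero_left]
  · intro β hβ
    have h1 := VT_rpow_add _ hA (x := β/2) (y := 1/2/2) (by linarith) (by norm_num)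
    have h2 := VT_rpow_add _ hA (x := 1/2/2) (y := β/2) (by norm_num) (by linarith)
    rw [add_comm] at h2
    exact h1.trans h2.symm
  · intro β hβ
    have hB := VT_gram (ContinuousLinearMap.adjoint T)
    refine VT_intertwine T _ _ hA hB ?_ (half_pos hβ)
    rw [ContinuousLinearMap.adjoint_adjoint, ContinuousLinearMap.comp_assoc]

/-- Hilbert-space case of Corollary 3.2: existence and uniqueness of the operator `V_T`
such that `V_T` and `V_T*` are the reduced solutions of `|T*|^{1/2} X = T` and
`|T|^{1/2} Y = T*`, together with its further properties. -/
theorem exists_unique_VT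
    {H K : Type*} [NormedAddCommGroup H] [InnerProductSpace ℂ H] [CompleteSpace H]
    [NormedAddCommGroup K] [InnerProductSpace ℂ K] [CompleteSpace K]
    (T : H →L[ℂ] K) :
    ∃ V : H →L[ℂ] K,
      ((absPow (ContinuousLinearMap.adjoint T) (1/2)).comp V = T ∧
        Set.range V ⊆ closure (Set.range T) ∧
        (absPow T (1/2)).comp (ContinuousLinearMap.adjoint V) = ContinuousLinearMap.adjoint T ∧
        Set.range (ContinuousLinearMap.adjoint V) ⊆
          closure (Set.range (ContinuousLinearMap.adjoint T))) ∧
      (∀ V' : H →L[ℂ] K,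
        ((absPow (ContinuousLinearMap.adjoint T) (1/2)).comp V' = T ∧
          Set.range V' ⊆ closure (Set.range T) ∧
          (absPow T (1/2)).comp (ContinuousLinearMap.adjoint V') = ContinuousLinearMap.adjoint T ∧
          Set.range (ContinuousLinearMap.adjoint V') ⊆
            closure (Set.range (ContinuousLinearMap.adjoint T))) → V' = V) ∧
      (ContinuousLinearMap.adjoint V).comp V = absPow T 1 ∧
      V.comp (ContinuousLinearMap.adjoint V) = absPow (ContinuousLinearMap.adjoint T) 1 ∧
      (∀ β : ℝ, 0 < β →
        V.comp (absPow T β) = (absPow (ContinuousLinearMap.adjoint T) β).comp V) ∧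
      closure (Set.range V) = closure (Set.range T) ∧
      closure (Set.range (ContinuousLinearMap.adjoint V)) =
        closure (Set.range (ContinuousLinearMap.adjoint T)) := by
  obtain ⟨hPs, hPP, hPA, hPk, hPk', hPc, hPi⟩ := VT_basic T
  obtain ⟨hQs, hQQ, hQB, hQk, hQk', hQc, hQi⟩ := VT_basic (ContinuousLinearMap.adjoint T)
  simp only [ContinuousLinearMap.adjoint_adjoint] at hQB hQi
  have hi := hPi (1/2) (by norm_num)
  have hi' := hQi (1/2) (by norm_num)
  set P := absPow T (1/2) with hPdef
  set Q := absPow (ContinuousLinearMap.adjoint T) (1/2) with hQdef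
  rw [← hPP] at hPA ⊢
  rw [← hQQ] at hQB ⊢
  have hbound : ∀ x, ‖T x‖ ≤ ‖P‖ * ‖P x‖ := by
    intro x
    have h2 : ‖T x‖ ^ 2 = ‖P (P x)‖ ^ 2 := by
      have h3 : inner ℂ (T x) (T x) = inner ℂ (P (P x)) (P (P x)) := by
        rw [← ContinuousLinearMap.adjoint_inner_left, ← ContinuousLinearMap.comp_apply, ← hPA]
        have hsym : ∀ u v, inner ℂ u (P v) = inner ℂ (P u) v := by
          intro u v
          rw [← ContinuousLinearMap.adjoint_inner_left, hPs]
        rw [hsym (P (P x)) (P x), hsym _ x]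
        rfl
      rw [inner_self_eq_norm_sq_to_K, inner_self_eq_norm_sq_to_K] at h3
      exact_mod_cast h3
    rw [sq_eq_sq₀ (norm_nonneg _) (norm_nonneg _)] at h2
    rw [h2]
    exact P.le_opNorm _
  obtain ⟨V, hVP, hV0⟩ := VT_douglas P hPs T _ hbound
  have hPV : P.comp (ContinuousLinearMap.adjoint V) = ContinuousLinearMap.adjoint T := by
    rw [← hVP, ContinuousLinearMap.adjoint_comp, hPs]
  have hQV : Q.comp V = T := by
    refine VT_cancel P hPs _ _ ?_ ?_
    · rw [ContinuousLinearMap.comp_assoc, hVP, hi]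
    · intro x hx
      rw [ContinuousLinearMap.comp_apply, hV0 x hx, map_zero, (hPk x).1 hx]
  have hVQ : (ContinuousLinearMap.adjoint V).comp Q = ContinuousLinearMap.adjoint T := by
    rw [← hQV, ContinuousLinearMap.adjoint_comp, hQs]
  have hVs0 : ∀ y, ContinuousLinearMap.adjoint T y = 0 → ContinuousLinearMap.adjoint V y = 0 := by
    intro y hy
    rw [← hPV, ContinuousLinearMap.comp_apply] at hy
    rw [← inner_self_eq_zero (𝕜 := ℂ), ContinuousLinearMap.adjoint_inner_left, hV0 _ hy,
      inner_zero_right]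
  have hkV : V.ker = T.ker := by
    ext x
    simp only [LinearMap.mem_ker, ContinuousLinearMap.coe_coe]
    refine ⟨fun h => ?_, fun h => hV0 x ((hPk x).2 h)⟩
    rw [← hQV, ContinuousLinearMap.comp_apply, h, map_zero]
  have hkVs : (ContinuousLinearMap.adjoint V).ker = (ContinuousLinearMap.adjoint T).ker := by
    ext x
    simp only [LinearMap.mem_ker, ContinuousLinearMap.coe_coe]
    refine ⟨fun h => ?_, hVs0 x⟩
    rw [← hPV, ContinuousLinearMap.comp_apply, h, map_zero]
  have hr1 : closure (Set.range V) = closure (Set.range T) := by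
    rw [VT_closure_range, VT_closure_range, hkVs]
  have hr2 : closure (Set.range (ContinuousLinearMap.adjoint V)) =
        closure (Set.range (ContinuousLinearMap.adjoint T)) := by
    rw [VT_closure_range, VT_closure_range, ContinuousLinearMap.adjoint_adjoint,
      ContinuousLinearMap.adjoint_adjoint, hkV]
  refine ⟨V, ⟨hQV, hr1 ▸ subset_closure, hPV, hr2 ▸ subset_closure⟩, ?_, ?_, ?_, ?_, hr1, hr2⟩
  · rintro V' ⟨h1, h2, -, -⟩
    rw [VT_closure_range] at h2 
    have h3 := hr1 ▸ (subset_closure : Set.range V ⊆ _)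
    rw [VT_closure_range] at h3
    ext x
    rw [← sub_eq_zero]
    have h4 : V' x - V x ∈ (ContinuousLinearMap.adjoint T).kerᗮ :=
      Submodule.sub_mem _ (h2 ⟨x, rfl⟩) (h3 ⟨x, rfl⟩)
    have h5 : V' x - V x ∈ (ContinuousLinearMap.adjoint T).ker := by
      refine (hQk _).1 ?_
      rw [map_sub, ← ContinuousLinearMap.comp_apply, ← ContinuousLinearMap.comp_apply, h1, hQV,
        sub_self]
    exact inner_self_eq_zero.1 (h4 _ h5)
  · have h1 : (ContinuousLinearMap.adjoint T).comp V = (P.comp P).comp P := by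
      refine VT_cancel P hPs _ _ ?_ ?_
      · rw [ContinuousLinearMap.comp_assoc, hVP, ← hPA]; rfl
      · intro x hx
        simp [hx, hV0 x hx]
    have h2 : (ContinuousLinearMap.adjoint V).comp T = (P.comp P).comp P := by
      have := congrArg ContinuousLinearMap.adjoint h1
      simp only [ContinuousLinearMap.adjoint_comp, ContinuousLinearMap.adjoint_adjoint, hPs] at this
      exact this
    refine VT_cancel P hPs _ _ ?_ ?_
    · rw [ContinuousLinearMap.comp_assoc, hVP, h2]
    · intro x hx
      simp [hx, hV0 x hx]
  · have h1 : V.comp (ContinuousLinearMap.adjoint T) = (Q.comp Q).comp Q := by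
      refine VT_cancel Q hQs _ _ ?_ ?_
      · rw [ContinuousLinearMap.comp_assoc, hi', ← ContinuousLinearMap.comp_assoc, hVP, ← hQB]; rfl
      · intro x hx
        simp [hx, (hQk x).1 hx]
    refine VT_cancel Q hQs _ _ ?_ ?_
    · rw [ContinuousLinearMap.comp_assoc, hVQ, h1]
    · intro x hx
      simp [hx, hVs0 x ((hQk x).1 hx)]
  · intro β hβ
    refine VT_cancel P hPs _ _ ?_ ?_
    · rw [ContinuousLinearMap.comp_assoc, hPc β hβ, ← ContinuousLinearMap.comp_assoc, hVP,
        ContinuousLinearMap.comp_assoc, hVP, hPi β hβ]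
    · intro x hx
      simp [hPk' β hβ x ((hPk x).1 hx), hV0 x hx]
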